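/- Let k be a commutative ring, and let C and D be ℕ-indexed chain complexes of k-modules. Assume that every term C_i of C is a flat k-module and that every boundary module B_i(C) = im(d: C_{i+1} → C_i) is a flat k-module. Then for every n ≥ 0 there is a natural short exact sequence of k-modules 0 → ⊕_{i+j=n} H_i(C) ⊗_k H_j(D) → H_n(C ⊗ D) → ⊕_{i+j=n-1} Tor_1^k(H_i(C), H_j(D)) → 0. -/

import Mathlib

open CategoryTheory Limits MonoidalCategory

noncomputable instance (k : Type) [CommRing k] : (curriedTensor (ModuleCat k)).Additive where
  map_add := by intros; ext : 2; simp [curriedTensor, MonoidalPreadditive.add_whiskerRight]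

noncomputable instance (k : Type) [CommRing k] (X : ModuleCat k) :
    ((curriedTensor (ModuleCat k)).obj X).Additive where
  map_add := by intros; simp [curriedTensor, MonoidalPreadditive.whiskerLeft_add]

/-!
The cycles `Z` and boundaries `B` of `C`, as complexes with zero differential, sit in a short exact
sequence `0 → Z → C → B[-1] → 0`. As `B` is flat, it stays exact after tensoring with `D`; and as
`Z` and `B` are flat with zero differential, `H(Z ⊗ D) = Z ⊗ H(D)` and `H(B ⊗ D) = B ⊗ H(D)`.
The connecting map of the long exact homology sequence is then induced by the inclusion `B → Z`.
Since `0 → B → Z → H(C) → 0` is a flat resolution, the cokernel of this map is `H(C) ⊗ H(D)` and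
its kernel is `Tor₁(H(C), H(D))`.
-/

universe u v

section LinearAlgebra

open scoped TensorProduct

section Tensor

variable {k A B C A' B' : Type*} [CommRing k] [AddCommGroup A] [Module k A]
  [AddCommGroup B] [Module k B] [AddCommGroup C] [Module k C] [AddCommGroup A'] [Module k A']
  [AddCommGroup B'] [Module k B']

theorem rTensor_lTensor_apply (f : A →ₗ[k] B) (g : A' →ₗ[k] B') (x : A ⊗[k] A') :
    f.rTensor B' (g.lTensor A x) = g.lTensor B (f.rTensor A' x) := by
  rw [← LinearMap.comp_apply, ← LinearMap.comp_apply, LinearMap.rTensor_comp_lTensor,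
    LinearMap.lTensor_comp_rTensor]

variable {i : A →ₗ[k] B} {p : B →ₗ[k] C}

/- The snake lemma for `(A → B → C) ⊗ (K → F)`: the kernel of `A ⊗ M → B ⊗ M` is a quotient of the
kernel of `C ⊗ K → C ⊗ F`. -/
theorem rTensor_injective_of_exact_of_flat_presentation {K F M : Type*} [AddCommGroup K]
    [Module k K] [AddCommGroup F] [Module k F] [AddCommGroup M] [Module k M] {κ : K →ₗ[k] F}
    {π : F →ₗ[k] M} [Module.Flat k C] [Module.Flat k F] (hi : Function.Injective i)
    (hip : Function.Exact i p) (hp : Function.Surjective p) (hκ : Function.Injective κ)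
    (hκπ : Function.Exact κ π) (hπ : Function.Surjective π) :
    Function.Injective (i.rTensor M) := by
  rw [injective_iff_map_eq_zero]
  intro x hx
  obtain ⟨x', rfl⟩ := LinearMap.lTensor_surjective A hπ x
  rw [rTensor_lTensor_apply] at hx
  obtain ⟨c, hc⟩ := (lTensor_exact B hκπ hπ _).1 hx
  have hpc : p.rTensor K c = 0 := by
    apply Module.Flat.lTensor_preserves_injective_linearMap (M := C) κ hκ
    rw [← rTensor_lTensor_apply, hc, map_zero, (rTensor_exact _ hip hp).apply_apply_eq_zero]
  obtain ⟨a, rfl⟩ := (rTensor_exact _ hip hp _).1 hpc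
  rw [← rTensor_lTensor_apply] at hc
  rw [← Module.Flat.rTensor_preserves_injective_linearMap (M := F) i hi hc]
  exact (lTensor_exact A hκπ hπ).apply_apply_eq_zero a

theorem rTensor_injective_of_exact_of_flat [Module.Flat k C] (M : Type*) [AddCommGroup M]
    [Module k M] (hi : Function.Injective i) (hip : Function.Exact i p)
    (hp : Function.Surjective p) : Function.Injective (i.rTensor M) :=
  let π : (M →₀ k) →ₗ[k] M := Finsupp.linearCombination k id
  rTensor_injective_of_exact_of_flat_presentation (K := LinearMap.ker π) hi hip hp
    (LinearMap.ker π).subtype_injective (LinearMap.exact_subtype_ker_map π)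
    (Finsupp.linearCombination_id_surjective k M)

theorem flat_of_exact_of_flat [Module.Flat k B] [Module.Flat k C] (hi : Function.Injective i)
    (hip : Function.Exact i p) (hp : Function.Surjective p) : Module.Flat k A := by
  rw [Module.Flat.iff_lTensor_preserves_injective_linearMap]
  intro N N' _ _ _ _ f hf
  have h : Function.Injective (f.lTensor B ∘ₗ i.rTensor N) :=
    (Module.Flat.lTensor_preserves_injective_linearMap f hf).comp
      (rTensor_injective_of_exact_of_flat N hi hip hp)
  rw [LinearMap.lTensor_comp_rTensor, ← LinearMap.rTensor_comp_lTensor] at h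
  exact Function.Injective.of_comp h

end Tensor

section Factorization

variable {R A N N' : Type*} [Ring R] [AddCommGroup A] [Module R A] [AddCommGroup N] [Module R N]
  [AddCommGroup N'] [Module R N']

theorem exists_linearEquiv_of_ker_eq {p : A →ₗ[R] N} {q : A →ₗ[R] N'}
    (hp : Function.Surjective p) (hq : Function.Surjective q)
    (h : LinearMap.ker p = LinearMap.ker q) : ∃ e : N ≃ₗ[R] N', ∀ a, e (p a) = q a := by
  refine ⟨(p.quotKerEquivOfSurjective hp).symm ≪≫ₗ Submodule.quotEquivOfEq _ _ h ≪≫ₗ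
    q.quotKerEquivOfSurjective hq, fun a => ?_⟩
  have : (p.quotKerEquivOfSurjective hp).symm (p a) = Submodule.Quotient.mk a := by
    rw [LinearEquiv.symm_apply_eq]; rfl
  simp [this]

theorem exists_shortExact_of_exact {A₁ A₂ H B₁ B₂ N T : Type*}
    [AddCommGroup A₁] [Module R A₁] [AddCommGroup A₂] [Module R A₂] [AddCommGroup H] [Module R H]
    [AddCommGroup B₁] [Module R B₁] [AddCommGroup B₂] [Module R B₂] [AddCommGroup N] [Module R N]
    [AddCommGroup T] [Module R T] {a : A₁ →ₗ[R] A₂} {f : A₂ →ₗ[R] H} {g : H →ₗ[R] B₁}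
    {b : B₁ →ₗ[R] B₂} {p : A₂ →ₗ[R] N} {t : T →ₗ[R] B₁} (haf : Function.Exact a f)
    (hfg : Function.Exact f g) (hgb : Function.Exact g b) (hap : Function.Exact a p)
    (hp : Function.Surjective p) (htb : Function.Exact t b) (ht : Function.Injective t) :
    ∃ (f' : N →ₗ[R] H) (g' : H →ₗ[R] T),
      Function.Injective f' ∧ Function.Exact f' g' ∧ Function.Surjective g' := by
  obtain ⟨e, -⟩ := exists_linearEquiv_of_ker_eq hp f.surjective_rangeRestrict
    (by rw [LinearMap.ker_rangeRestrict, hap.linearMap_ker_eq, haf.linearMap_ker_eq])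
  have hgt : LinearMap.range g = LinearMap.range t := by
    rw [← hgb.linearMap_ker_eq, htb.linearMap_ker_eq]
  let e' := LinearEquiv.ofEq _ _ hgt ≪≫ₗ (LinearEquiv.ofInjective t ht).symm
  refine ⟨(LinearMap.range f).subtype ∘ₗ e, e' ∘ₗ g.rangeRestrict,
    (Submodule.subtype_injective _).comp e.injective, ?_,
    e'.surjective.comp g.surjective_rangeRestrict⟩
  rw [LinearMap.exact_iff, LinearEquiv.ker_comp, LinearMap.ker_rangeRestrict, hfg.linearMap_ker_eq,
    LinearMap.range_comp_of_range_eq_top _ e.range, Submodule.range_subtype]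

end Factorization
end LinearAlgebra

theorem piMap_exact {R ι : Type*} [Semiring R] {A B C : ι → Type*}
    [∀ i, AddCommMonoid (A i)] [∀ i, Module R (A i)] [∀ i, AddCommMonoid (B i)]
    [∀ i, Module R (B i)] [∀ i, AddCommMonoid (C i)] [∀ i, Module R (C i)]
    {f : ∀ i, A i →ₗ[R] B i} {g : ∀ i, B i →ₗ[R] C i} (h : ∀ i, Function.Exact (f i) (g i)) :
    Function.Exact (LinearMap.piMap f) (LinearMap.piMap g) := by
  intro y
  constructor
  · intro hy
    choose x hx using fun i => (h i (y i)).1 (congrFun hy i)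
    exact ⟨x, funext hx⟩
  · rintro ⟨x, rfl⟩
    exact funext fun i => (h i).apply_apply_eq_zero (x i)

section ChainComplex

variable {R : Type u} [Ring R]

theorem down_next_eq_pred (n : ℕ) : (ComplexShape.down ℕ).next n = n - 1 := by
  cases n with
  | zero => exact ChainComplex.next_nat_zero
  | succ n => exact ChainComplex.next_nat_succ n

variable (K : ChainComplex (ModuleCat.{v} R) ℕ) (n : ℕ)

theorem iCycles_injective : Function.Injective (K.iCycles n).hom :=
  (ModuleCat.mono_iff_injective _).1 inferInstance

theorem homologyπ_surjective : Function.Surjective (K.homologyπ n).hom :=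
  (ModuleCat.epi_iff_surjective _).1 inferInstance

theorem iCycles_exact : Function.Exact (K.iCycles n).hom (K.d n (n - 1)).hom :=
  (ShortComplex.ShortExact.moduleCat_exact_iff_function_exact _).1
    (ShortComplex.exact_of_f_is_kernel (.mk _ _ (K.iCycles_d n (n - 1)))
      (K.cyclesIsKernel n (n - 1) (down_next_eq_pred n)))

theorem toCycles_exact : Function.Exact (K.toCycles (n + 1) n).hom (K.homologyπ n).hom :=
  (ShortComplex.ShortExact.moduleCat_exact_iff_function_exact _).1
    (ShortComplex.exact_of_g_is_cokernel (.mk _ _ (K.toCycles_comp_homologyπ (n + 1) n))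
      (K.homologyIsCokernel (n + 1) n (ChainComplex.prev _ n)))

theorem iCycles_toCycles_apply (x : K.X (n + 1)) :
    (K.iCycles n).hom ((K.toCycles (n + 1) n).hom x) = (K.d (n + 1) n).hom x :=
  ConcreteCategory.congr_hom (K.toCycles_i (n + 1) n) x

theorem homologyπ_eq_zero_iff (z : K.cycles n) :
    (K.homologyπ n).hom z = 0 ↔ ∃ x, (K.d (n + 1) n).hom x = (K.iCycles n).hom z := by
  simp only [toCycles_exact K n z, Set.mem_range, ← iCycles_toCycles_apply,
    (iCycles_injective K n).eq_iff]

variable {K n}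

theorem exists_homology_linearEquiv {A N : Type*} [AddCommGroup A] [Module R A] [AddCommGroup N]
    [Module R N] {c : A →ₗ[R] K.X n} {p : A →ₗ[R] N} (hc : Function.Exact c (K.d n (n - 1)).hom)
    (hp : Function.Surjective p)
    (hcp : ∀ a, p a = 0 ↔ ∃ x, (K.d (n + 1) n).hom x = c a) :
    ∃ e : N ≃ₗ[R] K.homology n,
      ∀ a z, (K.iCycles n).hom z = c a → e (p a) = (K.homologyπ n).hom z := by
  have hrange : LinearMap.range c = LinearMap.range (K.iCycles n).hom := by
    rw [← hc.linearMap_ker_eq, (iCycles_exact K n).linearMap_ker_eq]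
  let e₀ : LinearMap.range c ≃ₗ[R] K.cycles n :=
    LinearEquiv.ofEq _ _ hrange ≪≫ₗ
      (LinearEquiv.ofInjective (K.iCycles n).hom (iCycles_injective K n)).symm
  let r : A →ₗ[R] K.cycles n := e₀.toLinearMap ∘ₗ c.rangeRestrict
  have hr (a) : (K.iCycles n).hom (r a) = c a :=
    congrArg Subtype.val (LinearEquiv.apply_symm_apply
      (LinearEquiv.ofInjective (K.iCycles n).hom (iCycles_injective K n)) _)
  have r_surjective : Function.Surjective r := e₀.surjective.comp c.surjective_rangeRestrict
  obtain ⟨e, he⟩ := exists_linearEquiv_of_ker_eq (q := (K.homologyπ n).hom ∘ₗ r) hp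
    ((homologyπ_surjective K n).comp r_surjective) (by
      ext a
      simp only [LinearMap.mem_ker, LinearMap.comp_apply, hcp, homologyπ_eq_zero_iff, hr])
  refine ⟨e, fun a z hz => ?_⟩
  rw [he, LinearMap.comp_apply, iCycles_injective K n (hz.trans (hr a).symm)]

theorem δ_homologyπ_apply {S : ShortComplex (ChainComplex (ModuleCat.{v} R) ℕ)}
    (hS : S.ShortExact) {z₃ : S.X₃.cycles (n + 1)} {x₂ : S.X₂.X (n + 1)} {z₁ : S.X₁.cycles n}
    (h₃ : (S.g.f (n + 1)).hom x₂ = (S.X₃.iCycles (n + 1)).hom z₃)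
    (h₁ : (S.f.f n).hom ((S.X₁.iCycles n).hom z₁) = (S.X₂.d (n + 1) n).hom x₂) :
    (hS.δ (n + 1) n rfl).hom ((S.X₃.homologyπ (n + 1)).hom z₃) = (S.X₁.homologyπ n).hom z₁ := by
  refine hS.δ_apply' (n + 1) n rfl _ ((S.X₂.pOpcycles (n + 1)).hom x₂) z₁ ?_ ?_
  · have hp := ConcreteCategory.congr_hom (HomologicalComplex.p_opcyclesMap S.g (n + 1)) x₂
    have hι := ConcreteCategory.congr_hom (S.X₃.homology_π_ι (n + 1)) z₃
    exact hp.trans ((congrArg (S.X₃.pOpcycles (n + 1)).hom h₃).trans hι.symm)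
  · apply iCycles_injective S.X₂ n
    have hc := ConcreteCategory.congr_hom (HomologicalComplex.cyclesMap_i S.f n) z₁
    have hd := ConcreteCategory.congr_hom
      (S.X₂.pOpcycles_opcyclesToCycles_iCycles (n + 1) n) x₂
    exact hc.trans (h₁.trans hd.symm)

end ChainComplex

section TensorComplex

open scoped TensorProduct

/-- The degree `n` part of the tensor product of two graded modules. It is a finite direct sum,
encoded as a product over the pairs of degrees with sum `n`. -/
abbrev GradedTensor {k : Type u} [CommRing k] (A B : ℕ → ModuleCat.{u} k) (n : ℕ) : Type u :=
  ∀ p : {p : ℕ × ℕ // p.1 + p.2 = n}, A p.1.1 ⊗[k] B p.1.2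

instance finite_add_eq (n : ℕ) : Finite {p : ℕ × ℕ // p.1 + p.2 = n} :=
  ((Finset.HasAntidiagonal.antidiagonal n).finite_toSet.subset fun _ hp =>
    Finset.mem_coe.2 (Finset.HasAntidiagonal.mem_antidiagonal.2 hp)).to_subtype

instance finite_add_add_one_eq (n : ℕ) : Finite {p : ℕ × ℕ // p.1 + p.2 + 1 = n} :=
  Finite.of_injective (β := {p : ℕ × ℕ // p.1 + p.2 = n}) (fun p => ⟨(p.1.1 + 1, p.1.2), by lia⟩)
    fun p q h => by simpa [Subtype.ext_iff, Prod.ext_iff] using h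

namespace GradedTensor

variable {k : Type u} [CommRing k] {A A' A'' B B' B'' : ℕ → ModuleCat.{u} k}

/-- The map `f ⊗ B` of graded tensor products induced by a family of maps on the left factor. -/
def rTensor (f : ∀ i, A i ⟶ A' i) (B : ℕ → ModuleCat.{u} k) (n : ℕ) :
    GradedTensor A B n →ₗ[k] GradedTensor A' B n :=
  LinearMap.piMap fun p => (f p.1.1).hom.rTensor (B p.1.2)

/-- The map `A ⊗ g` of graded tensor products induced by a family of maps on the right factor. -/
def lTensor (A : ℕ → ModuleCat.{u} k) (g : ∀ j, B j ⟶ B' j) (n : ℕ) :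
    GradedTensor A B n →ₗ[k] GradedTensor A B' n :=
  LinearMap.piMap fun p => (g p.1.2).hom.lTensor (A p.1.1)

theorem rTensor_apply (f : ∀ i, A i ⟶ A' i) {n : ℕ} (x : GradedTensor A B n)
    (p : {p : ℕ × ℕ // p.1 + p.2 = n}) :
    rTensor f B n x p = (f p.1.1).hom.rTensor (B p.1.2) (x p) := rfl

theorem lTensor_apply (g : ∀ j, B j ⟶ B' j) {n : ℕ} (x : GradedTensor A B n)
    (p : {p : ℕ × ℕ // p.1 + p.2 = n}) :
    lTensor A g n x p = (g p.1.2).hom.lTensor (A p.1.1) (x p) := rfl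

theorem rTensor_lTensor_apply (f : ∀ i, A i ⟶ A' i) (g : ∀ j, B j ⟶ B' j) {n : ℕ}
    (x : GradedTensor A B n) :
    rTensor f B' n (lTensor A g n x) = lTensor A' g n (rTensor f B n x) :=
  funext fun p => _root_.rTensor_lTensor_apply (f p.1.1).hom (g p.1.2).hom (x p)

theorem rTensor_exact {f : ∀ i, A i ⟶ A' i} {g : ∀ i, A' i ⟶ A'' i}
    (h : ∀ i, Function.Exact (f i).hom (g i).hom) (hg : ∀ i, Function.Surjective (g i).hom)
    (B : ℕ → ModuleCat.{u} k) (n : ℕ) : Function.Exact (rTensor f B n) (rTensor g B n) :=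
  piMap_exact fun p => _root_.rTensor_exact _ (h p.1.1) (hg p.1.1)

theorem rTensor_surjective {f : ∀ i, A i ⟶ A' i} (hf : ∀ i, Function.Surjective (f i).hom)
    (B : ℕ → ModuleCat.{u} k) (n : ℕ) : Function.Surjective (rTensor f B n) :=
  Function.Surjective.piMap fun p => LinearMap.rTensor_surjective _ (hf p.1.1)

theorem lTensor_surjective (A : ℕ → ModuleCat.{u} k) {g : ∀ j, B j ⟶ B' j}
    (hg : ∀ j, Function.Surjective (g j).hom) (n : ℕ) : Function.Surjective (lTensor A g n) :=
  Function.Surjective.piMap fun p => LinearMap.lTensor_surjective _ (hg p.1.2)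

end GradedTensor

variable {k : Type u} [CommRing k] (C D : ChainComplex (ModuleCat.{u} k) ℕ)

/-- The inclusion of the summand `C_i ⊗ D_j` into `(C ⊗ D)_n`. -/
noncomputable abbrev tensorObjInclusion {n : ℕ} (p : {p : ℕ × ℕ // p.1 + p.2 = n}) :
    C.X p.1.1 ⊗[k] D.X p.1.2 →ₗ[k] (HomologicalComplex.tensorObj C D).X n :=
  (HomologicalComplex.ιTensorObj C D p.1.1 p.1.2 n p.2).hom

variable {C D} in
theorem tensorObj_linearMap_ext {n : ℕ} {M : Type u} [AddCommGroup M] [Module k M]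
    {f g : (HomologicalComplex.tensorObj C D).X n →ₗ[k] M}
    (h : ∀ p, f ∘ₗ tensorObjInclusion C D p = g ∘ₗ tensorObjInclusion C D p) : f = g := by
  have : ModuleCat.ofHom f = ModuleCat.ofHom g :=
    HomologicalComplex.mapBifunctor.hom_ext fun i j hij => ModuleCat.hom_ext (h ⟨(i, j), hij⟩)
  exact congrArg ModuleCat.Hom.hom this

open Classical in
/-- The map from `(C ⊗ D)_n` to the product of the `C_i ⊗ D_j` that is the identity on each summand;
it underlies `tensorObjEquiv`. -/
noncomputable def tensorObjToGradedTensor (n : ℕ) :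
    (HomologicalComplex.tensorObj C D).X n →ₗ[k] GradedTensor C.X D.X n :=
  (HomologicalComplex.mapBifunctorDesc (K₁ := C) (K₂ := D) (F := curriedTensor (ModuleCat k))
    (c := ComplexShape.down ℕ) (A := ModuleCat.of k (GradedTensor C.X D.X n))
    (fun i j h => ModuleCat.ofHom
      (LinearMap.single k (fun p : {p : ℕ × ℕ // p.1 + p.2 = n} => C.X p.1.1 ⊗[k] D.X p.1.2)
        ⟨(i, j), h⟩))).hom

open Classical in
theorem tensorObjToGradedTensor_inclusion {n : ℕ} (p : {p : ℕ × ℕ // p.1 + p.2 = n})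
    (z : C.X p.1.1 ⊗[k] D.X p.1.2) :
    tensorObjToGradedTensor C D n (tensorObjInclusion C D p z) = Pi.single p z :=
  ConcreteCategory.congr_hom (HomologicalComplex.ι_mapBifunctorDesc (K₁ := C) (K₂ := D)
    (F := curriedTensor (ModuleCat k)) (c := ComplexShape.down ℕ)
    (A := ModuleCat.of k (GradedTensor C.X D.X n)) (fun i j h => ModuleCat.ofHom
      (LinearMap.single k (fun p : {p : ℕ × ℕ // p.1 + p.2 = n} => C.X p.1.1 ⊗[k] D.X p.1.2)
        ⟨(i, j), h⟩)) p.1.1 p.1.2 p.2) z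

open Classical in
/-- The description of `(C ⊗ D)_n`, a coproduct in the category of modules, by the families of its
components in the `C_i ⊗ D_j`. -/
noncomputable def tensorObjEquiv (n : ℕ) :
    (HomologicalComplex.tensorObj C D).X n ≃ₗ[k] GradedTensor C.X D.X n :=
  have := Fintype.ofFinite {p : ℕ × ℕ // p.1 + p.2 = n}
  LinearEquiv.ofLinearMap (tensorObjToGradedTensor C D n)
    (LinearMap.lsum k _ k (tensorObjInclusion C D))
    (LinearMap.pi_ext fun p z => by
      simp [tensorObjToGradedTensor_inclusion, Finset.univ_sum_single])
    (tensorObj_linearMap_ext fun p => LinearMap.ext fun z => by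
      simp only [LinearMap.comp_apply, tensorObjToGradedTensor_inclusion, LinearMap.id_apply,
        LinearMap.lsum_piSingle])

open Classical in
theorem tensorObjEquiv_inclusion {n : ℕ} (p : {p : ℕ × ℕ // p.1 + p.2 = n})
    (z : C.X p.1.1 ⊗[k] D.X p.1.2) :
    tensorObjEquiv C D n (tensorObjInclusion C D p z) = Pi.single p z :=
  tensorObjToGradedTensor_inclusion C D p z

variable {C D} in
theorem tensorObj_induction {n : ℕ} {motive : (HomologicalComplex.tensorObj C D).X n → Prop}
    (zero : motive 0) (add : ∀ x y, motive x → motive y → motive (x + y))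
    (inclusion : ∀ p z, motive (tensorObjInclusion C D p z))
    (x : (HomologicalComplex.tensorObj C D).X n) : motive x := by
  classical
  have := Fintype.ofFinite {p : ℕ × ℕ // p.1 + p.2 = n}
  rw [← (tensorObjEquiv C D n).symm_apply_apply x,
    ← Finset.univ_sum_single (tensorObjEquiv C D n x), map_sum]
  refine Finset.sum_induction _ motive add zero fun p _ => ?_
  rw [← tensorObjEquiv_inclusion, LinearEquiv.symm_apply_apply]
  exact inclusion p _

theorem D₁_inclusion_zero {n j : ℕ} (h : 0 + j = n + 1) (z : C.X 0 ⊗[k] D.X j) :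
    (HomologicalComplex.mapBifunctor.D₁ C D (curriedTensor (ModuleCat k)) (ComplexShape.down ℕ)
      (n + 1) n).hom (tensorObjInclusion C D ⟨(0, j), h⟩ z) = 0 := by
  have hD := HomologicalComplex.mapBifunctor.ι_D₁ C D (curriedTensor (ModuleCat k))
    (ComplexShape.down ℕ) (n + 1) n 0 j h
  rw [HomologicalComplex.mapBifunctor.d₁_eq_zero _ _ _ _ _ _ _ (by simp)] at hD
  exact ConcreteCategory.congr_hom hD z

theorem D₁_inclusion_succ {n i j : ℕ} (h : i + 1 + j = n + 1) (z : C.X (i + 1) ⊗[k] D.X j) :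
    (HomologicalComplex.mapBifunctor.D₁ C D (curriedTensor (ModuleCat k)) (ComplexShape.down ℕ)
      (n + 1) n).hom (tensorObjInclusion C D ⟨(i + 1, j), h⟩ z) =
    tensorObjInclusion C D ⟨(i, j), by dsimp only; lia⟩
      ((C.d (i + 1) i).hom.rTensor (D.X j) z) := by
  have hD := HomologicalComplex.mapBifunctor.ι_D₁ C D (curriedTensor (ModuleCat k))
    (ComplexShape.down ℕ) (n + 1) n (i + 1) j h
  rw [HomologicalComplex.mapBifunctor.d₁_eq C D (curriedTensor (ModuleCat k))
    (ComplexShape.down ℕ) (i₁ := i + 1) (i₁' := i) rfl j n (show i + j = n by lia)] at hD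
  exact (ConcreteCategory.congr_hom hD z).trans (one_smul ℤˣ _)

theorem D₂_inclusion_zero {n i : ℕ} (h : i + 0 = n + 1) (z : C.X i ⊗[k] D.X 0) :
    (HomologicalComplex.mapBifunctor.D₂ C D (curriedTensor (ModuleCat k)) (ComplexShape.down ℕ)
      (n + 1) n).hom (tensorObjInclusion C D ⟨(i, 0), h⟩ z) = 0 := by
  have hD := HomologicalComplex.mapBifunctor.ι_D₂ C D (curriedTensor (ModuleCat k))
    (ComplexShape.down ℕ) (n + 1) n i 0 h
  rw [HomologicalComplex.mapBifunctor.d₂_eq_zero _ _ _ _ _ _ _ (by simp)] at hD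
  exact ConcreteCategory.congr_hom hD z

theorem D₂_inclusion_succ {n i j : ℕ} (h : i + (j + 1) = n + 1) (z : C.X i ⊗[k] D.X (j + 1)) :
    (HomologicalComplex.mapBifunctor.D₂ C D (curriedTensor (ModuleCat k)) (ComplexShape.down ℕ)
      (n + 1) n).hom (tensorObjInclusion C D ⟨(i, j + 1), h⟩ z) =
    (-1 : ℤˣ) ^ i •
      tensorObjInclusion C D ⟨(i, j), by dsimp only; lia⟩
        ((D.d (j + 1) j).hom.lTensor (C.X i) z) := by
  have hD := HomologicalComplex.mapBifunctor.ι_D₂ C D (curriedTensor (ModuleCat k))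
    (ComplexShape.down ℕ) (n + 1) n i (j + 1) h
  rw [HomologicalComplex.mapBifunctor.d₂_eq C D (curriedTensor (ModuleCat k))
    (ComplexShape.down ℕ) i (i₂ := j + 1) (i₂' := j) rfl n (show i + j = n by lia)] at hD
  exact ConcreteCategory.congr_hom hD z

theorem tensorObjEquiv_D₁ {n i j : ℕ} (h : i + j = n)
    (x : (HomologicalComplex.tensorObj C D).X (n + 1)) :
    tensorObjEquiv C D n ((HomologicalComplex.mapBifunctor.D₁ C D (curriedTensor (ModuleCat k))
        (ComplexShape.down ℕ) (n + 1) n).hom x) ⟨(i, j), h⟩ =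
      (C.d (i + 1) i).hom.rTensor (D.X j)
        (tensorObjEquiv C D (n + 1) x ⟨(i + 1, j), by dsimp only; lia⟩) := by
  classical
  induction x using tensorObj_induction with
  | zero => simp only [map_zero, Pi.zero_apply]
  | add x y hx hy => simp only [map_add, Pi.add_apply, hx, hy]
  | inclusion p z =>
    obtain ⟨⟨_ | a, b⟩, hab⟩ := p
    · rw [D₁_inclusion_zero, tensorObjEquiv_inclusion, map_zero, Pi.single_eq_of_ne (by simp),
        map_zero, Pi.zero_apply]
    · rw [D₁_inclusion_succ, tensorObjEquiv_inclusion, tensorObjEquiv_inclusion]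
      by_cases hai : a = i
      · obtain rfl : b = j := by dsimp only at hab; lia
        subst hai
        rw [Pi.single_eq_same, Pi.single_eq_same]
      · rw [Pi.single_eq_of_ne, Pi.single_eq_of_ne, map_zero] <;> simp [Ne.symm hai]

theorem tensorObjEquiv_D₂ {n i j : ℕ} (h : i + j = n)
    (x : (HomologicalComplex.tensorObj C D).X (n + 1)) :
    tensorObjEquiv C D n ((HomologicalComplex.mapBifunctor.D₂ C D (curriedTensor (ModuleCat k))
        (ComplexShape.down ℕ) (n + 1) n).hom x) ⟨(i, j), h⟩ =
      (-1 : ℤˣ) ^ i • (D.d (j + 1) j).hom.lTensor (C.X i)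
        (tensorObjEquiv C D (n + 1) x ⟨(i, j + 1), by dsimp only; lia⟩) := by
  classical
  induction x using tensorObj_induction with
  | zero => simp only [map_zero, Pi.zero_apply, smul_zero]
  | add x y hx hy => simp only [map_add, Pi.add_apply, hx, hy, smul_add]
  | inclusion p z =>
    obtain ⟨⟨a, _ | b⟩, hab⟩ := p
    · rw [D₂_inclusion_zero, tensorObjEquiv_inclusion, map_zero, Pi.single_eq_of_ne (by simp),
        map_zero, Pi.zero_apply, smul_zero]
    · rw [D₂_inclusion_succ, tensorObjEquiv_inclusion, Units.smul_def, map_zsmul,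
        tensorObjEquiv_inclusion, Pi.smul_apply, Units.smul_def]
      by_cases hai : a = i
      · obtain rfl : b = j := by dsimp only at hab; lia
        subst hai
        rw [Pi.single_eq_same, Pi.single_eq_same]
      · rw [Pi.single_eq_of_ne, Pi.single_eq_of_ne, map_zero, smul_zero, smul_zero] <;>
          simp [Ne.symm hai]

theorem tensorObjEquiv_d {n i j : ℕ} (h : i + j = n)
    (x : (HomologicalComplex.tensorObj C D).X (n + 1)) :
    tensorObjEquiv C D n (((HomologicalComplex.tensorObj C D).d (n + 1) n).hom x) ⟨(i, j), h⟩ =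
      (C.d (i + 1) i).hom.rTensor (D.X j)
        (tensorObjEquiv C D (n + 1) x ⟨(i + 1, j), by dsimp only; lia⟩) +
      (-1 : ℤˣ) ^ i • (D.d (j + 1) j).hom.lTensor (C.X i)
        (tensorObjEquiv C D (n + 1) x ⟨(i, j + 1), by dsimp only; lia⟩) := by
  rw [← tensorObjEquiv_D₁ C D h, ← tensorObjEquiv_D₂ C D h, ← Pi.add_apply, ← map_add]
  rfl

theorem tensorObjEquiv_tensorHom_id {C C' : ChainComplex (ModuleCat.{u} k) ℕ} (f : C ⟶ C') {n : ℕ}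
    (x : (HomologicalComplex.tensorObj C D).X n) :
    tensorObjEquiv C' D n (((HomologicalComplex.tensorHom f (𝟙 D)).f n).hom x) =
      GradedTensor.rTensor f.f D.X n (tensorObjEquiv C D n x) := by
  classical
  induction x using tensorObj_induction with
  | zero => simp only [map_zero]
  | add x y hx hy => simp only [map_add, hx, hy]
  | inclusion p z =>
    have hι := HomologicalComplex.ι_mapBifunctorMap f (𝟙 D) (curriedTensor (ModuleCat k))
      (ComplexShape.down ℕ) p.1.1 p.1.2 n p.2
    have hz : ((HomologicalComplex.tensorHom f (𝟙 D)).f n).hom (tensorObjInclusion C D p z) =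
        tensorObjInclusion C' D p ((f.f p.1.1).hom.rTensor (D.X p.1.2) z) := by
      rw [HomologicalComplex.id_f, CategoryTheory.Functor.map_id, Category.id_comp] at hι
      exact ConcreteCategory.congr_hom hι z
    rw [hz, tensorObjEquiv_inclusion, tensorObjEquiv_inclusion]
    funext q
    rw [GradedTensor.rTensor_apply]
    by_cases hqp : q = p
    · subst hqp
      rw [Pi.single_eq_same, Pi.single_eq_same]
    · rw [Pi.single_eq_of_ne hqp, Pi.single_eq_of_ne hqp, map_zero]

end TensorComplex

section Tor

open scoped TensorProduct

theorem homologyMap_homologyπ_apply {R : Type u} [Ring R]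
    {K L : ChainComplex (ModuleCat.{v} R) ℕ} (φ : K ⟶ L) {n : ℕ} {z : K.cycles n} {w : L.cycles n}
    (h : (L.iCycles n).hom w = (φ.f n).hom ((K.iCycles n).hom z)) :
    (HomologicalComplex.homologyMap φ n).hom ((K.homologyπ n).hom z) = (L.homologyπ n).hom w := by
  have hπ := ConcreteCategory.congr_hom (HomologicalComplex.homologyπ_naturality φ n) z
  have hi := ConcreteCategory.congr_hom (HomologicalComplex.cyclesMap_i φ n) z
  rw [iCycles_injective L n (h.trans hi.symm)]
  exact hπ

variable {k : Type u} [CommRing k]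

/-- The complex `M ⊗ P` obtained by tensoring each term of `P` with a fixed module `M`. -/
noncomputable abbrev tensorLeftComplex (M : ModuleCat.{u} k)
    (P : ChainComplex (ModuleCat.{u} k) ℕ) : ChainComplex (ModuleCat.{u} k) ℕ :=
  (((tensoringLeft (ModuleCat.{u} k)).obj M).mapHomologicalComplex _).obj P

theorem exists_tensor_linearEquiv_homology_zero {P : ChainComplex (ModuleCat.{u} k) ℕ}
    {Y : ModuleCat.{u} k} {ε : P.X 0 →ₗ[k] Y} (hε : Function.Surjective ε)
    (hdε : Function.Exact (P.d 1 0).hom ε) (M : ModuleCat.{u} k) :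
    ∃ e : M ⊗[k] Y ≃ₗ[k] (tensorLeftComplex M P).homology 0,
      ∀ a z, ((tensorLeftComplex M P).iCycles 0).hom z = a →
        e (ε.lTensor M a) = ((tensorLeftComplex M P).homologyπ 0).hom z :=
  exists_homology_linearEquiv (K := tensorLeftComplex M P) (n := 0) (c := LinearMap.id)
    (fun x => by simp) (LinearMap.lTensor_surjective M hε) (lTensor_exact M hdε hε)

variable {B Z H : ModuleCat.{u} k} {i : B ⟶ Z} {p : Z ⟶ H}

/-- The map of complexes `i ⊗ P`. -/
noncomputable abbrev tensorLeftComplexMap (i : B ⟶ Z) (P : ChainComplex (ModuleCat.{u} k) ℕ) :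
    tensorLeftComplex B P ⟶ tensorLeftComplex Z P :=
  (NatTrans.mapHomologicalComplex ((tensoringLeft _).map i) _).app P

theorem exists_tensor_linearEquiv_homology_zero_natural {P : ChainComplex (ModuleCat.{u} k) ℕ}
    {Y : ModuleCat.{u} k} {ε : P.X 0 →ₗ[k] Y} (hε : Function.Surjective ε)
    (hdε : Function.Exact (P.d 1 0).hom ε) (i : B ⟶ Z) :
    ∃ (eB : B ⊗[k] Y ≃ₗ[k] (tensorLeftComplex B P).homology 0)
      (eZ : Z ⊗[k] Y ≃ₗ[k] (tensorLeftComplex Z P).homology 0),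
      ∀ y, eZ (i.hom.rTensor Y y) =
        (HomologicalComplex.homologyMap (tensorLeftComplexMap i P) 0).hom (eB y) := by
  obtain ⟨eB, heB⟩ := exists_tensor_linearEquiv_homology_zero hε hdε B
  obtain ⟨eZ, heZ⟩ := exists_tensor_linearEquiv_homology_zero hε hdε Z
  have cycle {M : ModuleCat k} (x : M ⊗[k] P.X 0) :
      ∃ z, ((tensorLeftComplex M P).iCycles 0).hom z = x :=
    (iCycles_exact (tensorLeftComplex M P) 0 x).1 (by simp; rfl)
  refine ⟨eB, eZ, fun y => ?_⟩
  obtain ⟨a, rfl⟩ := LinearMap.lTensor_surjective B hε y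
  obtain ⟨z, hz⟩ := cycle a
  obtain ⟨w, hw⟩ := cycle (i.hom.rTensor _ a)
  rw [rTensor_lTensor_apply, heZ _ w hw, heB _ z hz]
  exact (homologyMap_homologyπ_apply _
    (hw.trans (congrArg (i.hom.rTensor (P.X 0)) hz.symm))).symm

/-- The sequence of complexes `B ⊗ P → Z ⊗ P → H ⊗ P`; for a projective resolution `P` of `Y`, its
homology sequence computes `Tor (H, Y)`. -/
noncomputable def tensorLeftShortComplex (i : B ⟶ Z) (p : Z ⟶ H) (hip : i ≫ p = 0)
    (P : ChainComplex (ModuleCat.{u} k) ℕ) : ShortComplex (ChainComplex (ModuleCat.{u} k) ℕ) where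
  X₁ := tensorLeftComplex B P
  X₂ := tensorLeftComplex Z P
  X₃ := tensorLeftComplex H P
  f := tensorLeftComplexMap i P
  g := tensorLeftComplexMap p P
  zero := by
    ext j : 1
    exact (comp_whiskerRight i p (P.X j)).symm.trans
      ((congrArg (· ▷ P.X j) hip).trans MonoidalPreadditive.zero_whiskerRight)

theorem tensorLeftShortComplex_shortExact (hi : Function.Injective i.hom)
    (hip : Function.Exact i.hom p.hom) (hp : Function.Surjective p.hom)
    (h₀ : i ≫ p = 0) (P : ChainComplex (ModuleCat.{u} k) ℕ) [∀ j, Module.Flat k (P.X j)] :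
    (tensorLeftShortComplex i p h₀ P).ShortExact :=
  HomologicalComplex.shortExact_of_degreewise_shortExact _ fun j =>
    ModuleCat.shortComplex_shortExact _ (rTensor_exact (P.X j) hip hp)
      (Module.Flat.rTensor_preserves_injective_linearMap (M := P.X j) i.hom hi)
      (LinearMap.rTensor_surjective (P.X j) hp)

theorem tensorLeftComplex_exactAt_succ {Y : ModuleCat.{u} k} (P : ProjectiveResolution Y)
    (Z : ModuleCat.{u} k) [Module.Flat k Z] (n : ℕ) :
    (tensorLeftComplex Z P.complex).ExactAt (n + 1) :=
  ((tensorLeftComplex Z P.complex).exactAt_iff' (n + 2) (n + 1) n (by simp) (by simp)).2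
    (ModuleCat.shortComplex_exact _ (Module.Flat.lTensor_exact Z
      ((ShortComplex.ShortExact.moduleCat_exact_iff_function_exact _).1 (P.exact_succ n))))

theorem exists_tor_one_exact [Module.Flat k Z] (hi : Function.Injective i.hom)
    (hip : Function.Exact i.hom p.hom) (hp : Function.Surjective p.hom) (Y : ModuleCat.{u} k) :
    ∃ t : ((Tor (ModuleCat k) 1).obj H).obj Y →ₗ[k] B ⊗[k] Y,
      Function.Injective t ∧ Function.Exact t (i.hom.rTensor Y) := by
  let P := projectiveResolution Y
  have flat (j) : Module.Flat k (P.complex.X j) :=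
    have := (IsProjective.iff_projective (P.complex.X j)).2 (P.projective j)
    inferInstance
  have h₀ : i ≫ p = 0 := ModuleCat.hom_ext hip.linearMap_comp_eq_zero
  let S := tensorLeftShortComplex i p h₀ P.complex
  have hS : S.ShortExact := tensorLeftShortComplex_shortExact hi hip hp h₀ P.complex
  let δ := hS.δ 1 0 rfl
  have δ_injective : Function.Injective δ.hom :=
    (ModuleCat.mono_iff_injective _).1
      (hS.mono_δ 1 0 rfl (tensorLeftComplex_exactAt_succ P Z 0).isZero_homology)
  have δ_exact : Function.Exact δ.hom (HomologicalComplex.homologyMap S.f 0).hom :=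
    (ShortComplex.ShortExact.moduleCat_exact_iff_function_exact _).1
      (hS.homology_exact₁ 1 0 rfl)
  obtain ⟨eB, eZ, he⟩ : ∃ (eB : B ⊗[k] Y ≃ₗ[k] S.X₁.homology 0)
      (eZ : Z ⊗[k] Y ≃ₗ[k] S.X₂.homology 0), ∀ y,
      eZ (i.hom.rTensor Y y) = (HomologicalComplex.homologyMap S.f 0).hom (eB y) :=
    exists_tensor_linearEquiv_homology_zero_natural
      ((ModuleCat.epi_iff_surjective (P.π.f 0)).1 inferInstance)
      ((ShortComplex.ShortExact.moduleCat_exact_iff_function_exact _).1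
        (ShortComplex.exact_of_g_is_cokernel (.mk _ _ P.complex_d_comp_π_f_zero)
          P.isColimitCokernelCofork)) i
  let eT : ((Tor (ModuleCat k) 1).obj H).obj Y ≃ₗ[k] S.X₃.homology 1 :=
    (P.isoLeftDerivedObj ((tensoringLeft (ModuleCat k)).obj H) 1).toLinearEquiv
  refine ⟨eB.symm ∘ₗ δ.hom ∘ₗ eT, eB.symm.injective.comp (δ_injective.comp eT.injective),
    fun y => ?_⟩
  rw [← eZ.map_eq_zero_iff, he, δ_exact, ← eT.surjective.range_comp]
  simp only [Set.mem_range, Function.comp_apply, LinearMap.comp_apply, LinearEquiv.coe_coe,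
    LinearEquiv.symm_apply_eq]

end Tor

section ShortExact

variable {k : Type u} [CommRing k]

/-- The sequence of complexes `S₁ ⊗ D → S₂ ⊗ D → S₃ ⊗ D`. -/
noncomputable abbrev tensorRightShortComplex (S : ShortComplex (ChainComplex (ModuleCat.{u} k) ℕ))
    (D : ChainComplex (ModuleCat.{u} k) ℕ) : ShortComplex (ChainComplex (ModuleCat.{u} k) ℕ) where
  X₁ := HomologicalComplex.tensorObj S.X₁ D
  X₂ := HomologicalComplex.tensorObj S.X₂ D
  X₃ := HomologicalComplex.tensorObj S.X₃ D
  f := HomologicalComplex.tensorHom S.f (𝟙 D)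
  g := HomologicalComplex.tensorHom S.g (𝟙 D)
  zero := by
    ext n : 2
    refine LinearMap.ext fun x => (tensorObjEquiv S.X₃ D n).injective ?_
    have hfg : GradedTensor.rTensor S.g.f D.X n (GradedTensor.rTensor S.f.f D.X n
        (tensorObjEquiv S.X₁ D n x)) = 0 := funext fun p => by
      rw [GradedTensor.rTensor_apply, GradedTensor.rTensor_apply, ← LinearMap.rTensor_comp_apply,
        ← ModuleCat.hom_comp, ← HomologicalComplex.comp_f, S.zero]
      exact LinearMap.congr_fun (LinearMap.rTensor_zero _) _
    rw [← tensorObjEquiv_tensorHom_id, ← tensorObjEquiv_tensorHom_id] at hfg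
    exact hfg.trans (map_zero _).symm

theorem tensorRightShortComplex_shortExact
    {S : ShortComplex (ChainComplex (ModuleCat.{u} k) ℕ)}
    (hf : ∀ i, Function.Injective (S.f.f i).hom)
    (hfg : ∀ i, Function.Exact (S.f.f i).hom (S.g.f i).hom)
    (hg : ∀ i, Function.Surjective (S.g.f i).hom) (flat : ∀ i, Module.Flat k (S.X₃.X i))
    (D : ChainComplex (ModuleCat.{u} k) ℕ) : (tensorRightShortComplex S D).ShortExact := by
  refine HomologicalComplex.shortExact_of_degreewise_shortExact _ fun n => ?_
  have comm {K L : ChainComplex (ModuleCat.{u} k) ℕ} (φ : K ⟶ L) :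
      GradedTensor.rTensor φ.f D.X n ∘ₗ tensorObjEquiv K D n =
        tensorObjEquiv L D n ∘ₗ ((HomologicalComplex.tensorHom φ (𝟙 D)).f n).hom :=
    LinearMap.ext fun x => (tensorObjEquiv_tensorHom_id D φ x).symm
  have injective : Function.Injective (GradedTensor.rTensor S.f.f D.X n) :=
    Function.Injective.piMap fun p =>
      rTensor_injective_of_exact_of_flat _ (hf p.1.1) (hfg p.1.1) (hg p.1.1)
  refine ModuleCat.shortComplex_shortExact _ ?_ ?_ ?_
  · exact (Function.Exact.iff_of_ladder_linearEquiv (comm S.f) (comm S.g)).1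
      (GradedTensor.rTensor_exact hfg hg D.X n)
  · refine Function.Injective.of_comp (f := tensorObjEquiv S.X₂ D n) ?_
    exact (congrArg Function.Injective (congrArg DFunLike.coe (comm S.f))).mp
      (injective.comp (tensorObjEquiv S.X₁ D n).injective)
  · refine Function.Surjective.of_comp_left (f := tensorObjEquiv S.X₃ D n) ?_
      (tensorObjEquiv S.X₃ D n).injective
    exact (congrArg Function.Surjective (congrArg DFunLike.coe (comm S.g))).mp
      ((GradedTensor.rTensor_surjective hg D.X n).comp (tensorObjEquiv S.X₂ D n).surjective)

end ShortExact

section ZeroDifferential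

variable {k : Type u} [CommRing k]

/-- A graded module regarded as a chain complex with zero differential. -/
abbrev zeroDifferential (E : ℕ → ModuleCat.{u} k) : ChainComplex (ModuleCat.{u} k) ℕ where
  X := E
  d _ _ := 0

theorem GradedTensor.lTensor_exact (E : ℕ → ModuleCat.{u} k) [∀ i, Module.Flat k (E i)]
    {B B' B'' : ℕ → ModuleCat.{u} k} {f : ∀ i, B i ⟶ B' i} {g : ∀ i, B' i ⟶ B'' i}
    (h : ∀ i, Function.Exact (f i).hom (g i).hom) (n : ℕ) :
    Function.Exact (lTensor E f n) (lTensor E g n) :=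
  piMap_exact fun p => Module.Flat.lTensor_exact (E p.1.1) (h p.1.2)

theorem GradedTensor.lTensor_exact_of_surjective (E : ℕ → ModuleCat.{u} k)
    {B B' B'' : ℕ → ModuleCat.{u} k} {f : ∀ i, B i ⟶ B' i} {g : ∀ i, B' i ⟶ B'' i}
    (h : ∀ i, Function.Exact (f i).hom (g i).hom) (hg : ∀ i, Function.Surjective (g i).hom)
    (n : ℕ) : Function.Exact (lTensor E f n) (lTensor E g n) :=
  piMap_exact fun p => _root_.lTensor_exact (E p.1.1) (h p.1.2) (hg p.1.2)

theorem GradedTensor.lTensor_injective (E : ℕ → ModuleCat.{u} k) [∀ i, Module.Flat k (E i)]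
    {B B' : ℕ → ModuleCat.{u} k} {f : ∀ i, B i ⟶ B' i}
    (h : ∀ i, Function.Injective (f i).hom) (n : ℕ) :
    Function.Injective (lTensor E f n) :=
  Function.Injective.piMap fun p => Module.Flat.lTensor_preserves_injective_linearMap _ (h p.1.2)

variable (E : ℕ → ModuleCat.{u} k) (D : ChainComplex (ModuleCat.{u} k) ℕ)

theorem tensorObjEquiv_zeroDifferential_d {n i j : ℕ} (h : i + j = n)
    (x : (HomologicalComplex.tensorObj (zeroDifferential E) D).X (n + 1)) :
    tensorObjEquiv (zeroDifferential E) D n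
        (((HomologicalComplex.tensorObj (zeroDifferential E) D).d (n + 1) n).hom x) ⟨(i, j), h⟩ =
      (-1 : ℤˣ) ^ i • (D.d (j + 1) j).hom.lTensor (E i)
        (tensorObjEquiv (zeroDifferential E) D (n + 1) x ⟨(i, j + 1), by dsimp only; lia⟩) := by
  have hE : ((zeroDifferential E).d (i + 1) i).hom.rTensor (D.X j) = 0 :=
    LinearMap.rTensor_zero _
  rw [tensorObjEquiv_d, hE, LinearMap.zero_apply, zero_add]

theorem zeroDifferential_d_eq_zero_iff {n : ℕ}
    (x : (HomologicalComplex.tensorObj (zeroDifferential E) D).X n) :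
    ((HomologicalComplex.tensorObj (zeroDifferential E) D).d n (n - 1)).hom x = 0 ↔
      GradedTensor.lTensor E (fun j => D.d j (j - 1)) n
        (tensorObjEquiv (zeroDifferential E) D n x) = 0 := by
  have bottom_row {i : ℕ} (h : i + 0 = n) : GradedTensor.lTensor E (fun j => D.d j (j - 1)) n
      (tensorObjEquiv (zeroDifferential E) D n x) ⟨(i, 0), h⟩ = 0 := by
    have hd : D.d 0 (0 - 1) = 0 := D.shape _ _ (by simp)
    rw [GradedTensor.lTensor_apply]
    dsimp only
    rw [hd]
    exact LinearMap.congr_fun (LinearMap.lTensor_zero _) _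
  cases n with
  | zero =>
    rw [HomologicalComplex.shape _ _ _ (by simp)]
    refine iff_of_true rfl (funext fun ⟨⟨i, j⟩, hij⟩ => ?_)
    obtain rfl : j = 0 := by dsimp only at hij; lia
    exact bottom_row hij
  | succ n =>
    rw [← (tensorObjEquiv (zeroDifferential E) D _).map_eq_zero_iff, funext_iff, funext_iff]
    constructor
    · rintro h ⟨⟨i, _ | j⟩, hij⟩
      · exact bottom_row hij
      · have hij' := h ⟨(i, j), by dsimp only at hij ⊢; lia⟩
        refine (smul_eq_zero_iff_eq ((-1 : ℤˣ) ^ i)).1 ?_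
        exact (tensorObjEquiv_zeroDifferential_d E D _ x).symm.trans hij'
    · rintro h ⟨⟨i, j⟩, hij⟩
      refine (tensorObjEquiv_zeroDifferential_d E D _ x).trans ?_
      refine (smul_eq_zero_iff_eq ((-1 : ℤˣ) ^ i)).2 ?_
      exact h ⟨(i, j + 1), _⟩

theorem exists_tensorObj_zeroDifferential_d_eq {n : ℕ}
    (y : GradedTensor E (fun j => D.X (j + 1)) n) :
    ∃ x : (HomologicalComplex.tensorObj (zeroDifferential E) D).X (n + 1),
      tensorObjEquiv (zeroDifferential E) D n
        (((HomologicalComplex.tensorObj (zeroDifferential E) D).d (n + 1) n).hom x) =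
      GradedTensor.lTensor E (fun j => D.d (j + 1) j) n y := by
  let x : GradedTensor E D.X (n + 1)
    | ⟨(_, 0), _⟩ => 0
    | ⟨(i, j + 1), h⟩ => (-1 : ℤˣ) ^ i • y ⟨(i, j), by dsimp only at h ⊢; lia⟩
  refine ⟨(tensorObjEquiv (zeroDifferential E) D (n + 1)).symm x, funext fun ⟨(i, j), hij⟩ => ?_⟩
  rw [tensorObjEquiv_zeroDifferential_d, LinearEquiv.apply_symm_apply, GradedTensor.lTensor_apply]
  dsimp only [x]
  rw [LinearMap.map_smul_of_tower, smul_smul, Int.units_mul_self, one_smul]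

theorem lTensor_homologyπ_eq_zero_iff [∀ i, Module.Flat k (E i)] {n : ℕ}
    (a : GradedTensor E (D.cycles ·) n) :
    GradedTensor.lTensor E (D.homologyπ ·) n a = 0 ↔
      ∃ x, ((HomologicalComplex.tensorObj (zeroDifferential E) D).d (n + 1) n).hom x =
        (tensorObjEquiv (zeroDifferential E) D n).symm
          (GradedTensor.lTensor E (D.iCycles ·) n a) := by
  have d_eq (y) : GradedTensor.lTensor E (fun j => D.d (j + 1) j) n y =
      GradedTensor.lTensor E (D.iCycles ·) n
        (GradedTensor.lTensor E (fun j => D.toCycles (j + 1) j) n y) := by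
    funext p
    simp only [GradedTensor.lTensor_apply, ← LinearMap.lTensor_comp_apply, ← ModuleCat.hom_comp,
      HomologicalComplex.toCycles_i]
  rw [GradedTensor.lTensor_exact_of_surjective E (fun j => toCycles_exact D j)
    (fun j => homologyπ_surjective D j)]
  constructor
  · rintro ⟨y, rfl⟩
    obtain ⟨x, hx⟩ := exists_tensorObj_zeroDifferential_d_eq E D y
    exact ⟨x, by rw [LinearEquiv.eq_symm_apply, hx, d_eq]⟩
  · rintro ⟨x, hx⟩
    refine ⟨fun p => (-1 : ℤˣ) ^ p.1.1 •
      tensorObjEquiv (zeroDifferential E) D (n + 1) x ⟨(p.1.1, p.1.2 + 1), by lia⟩,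
      GradedTensor.lTensor_injective E (iCycles_injective D ·) n ?_⟩
    rw [← d_eq, ← (LinearEquiv.eq_symm_apply _).1 hx]
    funext p
    rw [tensorObjEquiv_zeroDifferential_d, GradedTensor.lTensor_apply,
      LinearMap.map_smul_of_tower]

theorem exists_gradedTensor_linearEquiv_homology [∀ i, Module.Flat k (E i)] (n : ℕ) :
    ∃ e : GradedTensor E (D.homology ·) n ≃ₗ[k]
        (HomologicalComplex.tensorObj (zeroDifferential E) D).homology n,
      ∀ a z, ((HomologicalComplex.tensorObj (zeroDifferential E) D).iCycles n).hom z =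
          (tensorObjEquiv (zeroDifferential E) D n).symm
            (GradedTensor.lTensor E (D.iCycles ·) n a) →
        e (GradedTensor.lTensor E (D.homologyπ ·) n a) =
          ((HomologicalComplex.tensorObj (zeroDifferential E) D).homologyπ n).hom z := by
  refine exists_homology_linearEquiv
    (c := (tensorObjEquiv (zeroDifferential E) D n).symm.toLinearMap ∘ₗ
      GradedTensor.lTensor E (D.iCycles ·) n) (fun x => ?_)
    (GradedTensor.lTensor_surjective E (fun j => homologyπ_surjective D j) n)
    (lTensor_homologyπ_eq_zero_iff E D)
  rw [zeroDifferential_d_eq_zero_iff, GradedTensor.lTensor_exact E (fun j => iCycles_exact D j)]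
  simp only [Set.mem_range, LinearMap.comp_apply, LinearEquiv.coe_coe, LinearEquiv.symm_apply_eq]

end ZeroDifferential

section Connecting

open scoped TensorProduct

variable {k : Type u} [CommRing k]

/-- The reindexing `(i + 1, j) ↦ (i, j)` of a graded tensor product whose left factor vanishes in
degree `0`. The predicate `s` describes the remaining pairs of degrees. -/
def GradedTensor.shiftEquiv (A B : ℕ → ModuleCat.{u} k) [Subsingleton (A 0)] {s : ℕ × ℕ → Prop}
    {n : ℕ} (hs : ∀ p, s p ↔ p.1 + 1 + p.2 = n) :
    GradedTensor A B n ≃ₗ[k] ∀ p : {p : ℕ × ℕ // s p}, A (p.1.1 + 1) ⊗[k] B p.1.2 where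
  toFun x p := x ⟨(p.1.1 + 1, p.1.2), (hs p.1).1 p.2⟩
  invFun y
    | ⟨(0, _), _⟩ => 0
    | ⟨(i + 1, j), h⟩ => y ⟨(i, j), (hs (i, j)).2 h⟩
  map_add' _ _ := rfl
  map_smul' _ _ := rfl
  left_inv x := by
    funext ⟨⟨i, j⟩, h⟩
    cases i with
    | zero => exact Subsingleton.elim (α := A 0 ⊗[k] B j) _ _
    | succ i => rfl
  right_inv _ := rfl

variable (C D : ChainComplex (ModuleCat.{u} k) ℕ)

/-- The image of the differential out of degree `i`: the boundary module `B_{i-1}` of `C` for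
`0 < i`, and `0` for `i = 0`. -/
abbrev differentialRange (i : ℕ) : ModuleCat.{u} k :=
  ModuleCat.of k (LinearMap.range (C.d i (i - 1)).hom)

instance subsingleton_differentialRange_zero : Subsingleton (differentialRange C 0) := by
  rw [Submodule.subsingleton_iff_eq_bot, C.shape _ _ (by simp)]
  exact LinearMap.range_zero

theorem flat_differentialRange
    (h : ∀ i, Module.Flat k (LinearMap.range (C.d (i + 1) i).hom)) :
    ∀ i, Module.Flat k (differentialRange C i)
  | 0 => inferInstance
  | i + 1 => h i

/-- The inclusion of the boundaries into the cycles. -/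
noncomputable def boundaryToCycles (i : ℕ) : differentialRange C (i + 1) ⟶ C.cycles i :=
  C.liftCycles (ModuleCat.ofHom (LinearMap.range (C.d (i + 1) i).hom).subtype) (i - 1)
    (down_next_eq_pred i) (ModuleCat.hom_ext (LinearMap.ext fun ⟨_, x, hx⟩ =>
      hx ▸ ConcreteCategory.congr_hom (C.d_comp_d (i + 1) i (i - 1)) x))

theorem iCycles_boundaryToCycles_apply {i : ℕ} (b : differentialRange C (i + 1)) :
    (C.iCycles i).hom ((boundaryToCycles C i).hom b) = b.val :=
  ConcreteCategory.congr_hom (C.liftCycles_i _ _ _ _) b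

theorem boundaryToCycles_injective (i : ℕ) : Function.Injective (boundaryToCycles C i).hom :=
  fun b b' h => Subtype.ext <| by
    rw [← iCycles_boundaryToCycles_apply, h, iCycles_boundaryToCycles_apply]

/-- The differential, corestricted to its image. -/
noncomputable abbrev toDifferentialRange (i : ℕ) : C.X i ⟶ differentialRange C i :=
  ModuleCat.ofHom (C.d i (i - 1)).hom.rangeRestrict

theorem toDifferentialRange_surjective (i : ℕ) :
    Function.Surjective (toDifferentialRange C i).hom :=
  LinearMap.surjective_rangeRestrict _

theorem toDifferentialRange_boundaryToCycles (i : ℕ) :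
    toDifferentialRange C (i + 1) ≫ boundaryToCycles C i = C.toCycles (i + 1) i := by
  ext x
  apply iCycles_injective C i
  rw [iCycles_toCycles_apply]
  exact iCycles_boundaryToCycles_apply C _

theorem boundaryToCycles_exact (i : ℕ) :
    Function.Exact (boundaryToCycles C i).hom (C.homologyπ i).hom := fun z => by
  rw [toCycles_exact, ← toDifferentialRange_boundaryToCycles,
    ← (toDifferentialRange_surjective C (i + 1)).range_comp]
  rfl

theorem toDifferentialRange_exact (i : ℕ) :
    Function.Exact (C.iCycles i).hom (toDifferentialRange C i).hom := fun x =>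
  Subtype.ext_iff.trans (iCycles_exact C i x)

/-- The sequence `0 → Z(C) → C → B(C)[-1] → 0`, in which the cycles and the boundaries carry the
zero differential. -/
noncomputable abbrev cyclesShortComplex : ShortComplex (ChainComplex (ModuleCat.{u} k) ℕ) where
  X₁ := zeroDifferential (C.cycles ·)
  X₂ := C
  X₃ := zeroDifferential (differentialRange C)
  f := { f := (C.iCycles ·) }
  g := { f := toDifferentialRange C
         comm' := fun i j _ => by
          have hd : C.d i j ≫ toDifferentialRange C j = 0 :=
            ModuleCat.hom_ext (LinearMap.ext fun x =>
              Subtype.ext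
                (ConcreteCategory.congr_hom (C.d_comp_d i j (j - 1)) x))
          rw [hd, comp_zero] }
  zero := HomologicalComplex.hom_ext _ _ fun i =>
    ModuleCat.hom_ext (toDifferentialRange_exact C i).linearMap_comp_eq_zero

section Flat

variable [∀ i, Module.Flat k (differentialRange C i)]

theorem tensorRight_cyclesShortComplex_shortExact :
    (tensorRightShortComplex (cyclesShortComplex C) D).ShortExact :=
  tensorRightShortComplex_shortExact (S := cyclesShortComplex C) (fun i => iCycles_injective C i)
    (fun i => toDifferentialRange_exact C i) (fun i => toDifferentialRange_surjective C i)
    (fun i => inferInstanceAs (Module.Flat k (differentialRange C i))) D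

theorem flat_cycles [∀ i, Module.Flat k (C.X i)] (i : ℕ) : Module.Flat k (C.cycles i) :=
  flat_of_exact_of_flat (iCycles_injective C i) (toDifferentialRange_exact C i)
    (toDifferentialRange_surjective C i)

end Flat

end Connecting

section Kuenneth

open scoped TensorProduct

variable {k : Type u} [CommRing k]

/-- The Künneth isomorphism `⨁ E_i ⊗ H_j(D) ≃ H_n(E ⊗ D)` for a flat graded module `E` with zero
differential. -/
noncomputable def zeroDifferentialHomologyEquiv (E : ℕ → ModuleCat.{u} k)
    [∀ i, Module.Flat k (E i)] (D : ChainComplex (ModuleCat.{u} k) ℕ) (n : ℕ) :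
    GradedTensor E (D.homology ·) n ≃ₗ[k]
      (HomologicalComplex.tensorObj (zeroDifferential E) D).homology n :=
  (exists_gradedTensor_linearEquiv_homology E D n).choose

theorem zeroDifferentialHomologyEquiv_lTensor_homologyπ {E : ℕ → ModuleCat.{u} k}
    [∀ i, Module.Flat k (E i)] {D : ChainComplex (ModuleCat.{u} k) ℕ} {n : ℕ}
    (a : GradedTensor E (D.cycles ·) n)
    {z : (HomologicalComplex.tensorObj (zeroDifferential E) D).cycles n}
    (hz : tensorObjEquiv (zeroDifferential E) D n
        (((HomologicalComplex.tensorObj (zeroDifferential E) D).iCycles n).hom z) =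
      GradedTensor.lTensor E (D.iCycles ·) n a) :
    zeroDifferentialHomologyEquiv E D n (GradedTensor.lTensor E (D.homologyπ ·) n a) =
      ((HomologicalComplex.tensorObj (zeroDifferential E) D).homologyπ n).hom z :=
  (exists_gradedTensor_linearEquiv_homology E D n).choose_spec a z
    ((LinearEquiv.eq_symm_apply _).2 hz)

theorem exists_cycle_of_lTensor_iCycles (E : ℕ → ModuleCat.{u} k)
    [∀ i, Module.Flat k (E i)] (D : ChainComplex (ModuleCat.{u} k) ℕ) {n : ℕ}
    (a : GradedTensor E (D.cycles ·) n) :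
    ∃ z, tensorObjEquiv (zeroDifferential E) D n
        (((HomologicalComplex.tensorObj (zeroDifferential E) D).iCycles n).hom z) =
      GradedTensor.lTensor E (D.iCycles ·) n a := by
  obtain ⟨z, hz⟩ := (iCycles_exact _ n ((tensorObjEquiv (zeroDifferential E) D n).symm
    (GradedTensor.lTensor E (D.iCycles ·) n a))).1 (by
      rw [zeroDifferential_d_eq_zero_iff, LinearEquiv.apply_symm_apply]
      exact (GradedTensor.lTensor_exact E (iCycles_exact D ·) n).apply_apply_eq_zero a)
  exact ⟨z, (LinearEquiv.eq_symm_apply _).1 hz⟩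

variable (C D : ChainComplex (ModuleCat.{u} k) ℕ)

/-- The map `⨁ B_i ⊗ H_j(D) → ⨁ Z_i ⊗ H_j(D)` induced by the inclusions of the boundaries into the
cycles, which corresponds to the connecting map of `tensorRight_cyclesShortComplex_shortExact`. Its
source is indexed with `differentialRange`, so that it starts in total degree one more. -/
noncomputable def connectingMap {s : ℕ × ℕ → Prop} {n : ℕ} (hs : ∀ p, s p ↔ p.1 + 1 + p.2 = n) :
    GradedTensor (differentialRange C) (D.homology ·) n →ₗ[k]
      ∀ p : {p : ℕ × ℕ // s p}, C.cycles p.1.1 ⊗[k] D.homology p.1.2 :=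
  (LinearMap.piMap fun p => (boundaryToCycles C p.1.1).hom.rTensor (D.homology p.1.2)) ∘ₗ
    (GradedTensor.shiftEquiv (differentialRange C) (D.homology ·) hs).toLinearMap

variable {C D} in
theorem connectingMap_apply {s : ℕ × ℕ → Prop} {n : ℕ} (hs : ∀ p, s p ↔ p.1 + 1 + p.2 = n)
    (y : GradedTensor (differentialRange C) (D.homology ·) n) (p : {p : ℕ × ℕ // s p}) :
    connectingMap C D hs y p = (boundaryToCycles C p.1.1).hom.rTensor (D.homology p.1.2)
      (y ⟨(p.1.1 + 1, p.1.2), (hs p.1).1 p.2⟩) := rfl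

/-- The map `d ⊗ B` of graded tensor products, corestricted to the cycles of `C`. -/
noncomputable def rTensorToCycles (B : ℕ → ModuleCat.{u} k) (n : ℕ) :
    GradedTensor C.X B (n + 1) →ₗ[k] GradedTensor (C.cycles ·) B n :=
  LinearMap.pi fun p => (C.toCycles (p.1.1 + 1) p.1.1).hom.rTensor (B p.1.2) ∘ₗ
    LinearMap.proj (⟨(p.1.1 + 1, p.1.2), by lia⟩ : {q : ℕ × ℕ // q.1 + q.2 = n + 1})

theorem connectingMap_lTensor_homologyπ {n : ℕ} (x : GradedTensor C.X (D.cycles ·) (n + 1)) :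
    connectingMap C D (s := fun p => p.1 + p.2 = n) (fun p => by lia)
        (GradedTensor.lTensor (differentialRange C) (D.homologyπ ·) (n + 1)
          (GradedTensor.rTensor (toDifferentialRange C) (D.cycles ·) (n + 1) x)) =
      GradedTensor.lTensor (C.cycles ·) (D.homologyπ ·) n
        (rTensorToCycles C (D.cycles ·) n x) := by
  funext p
  rw [connectingMap_apply, GradedTensor.lTensor_apply, GradedTensor.rTensor_apply,
    GradedTensor.lTensor_apply, rTensor_lTensor_apply, ← LinearMap.rTensor_comp_apply,
    ← ModuleCat.hom_comp, toDifferentialRange_boundaryToCycles]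
  rfl

theorem tensorObjEquiv_d_lTensor_iCycles {n : ℕ} (x : GradedTensor C.X (D.cycles ·) (n + 1)) :
    tensorObjEquiv C D n (((HomologicalComplex.tensorObj C D).d (n + 1) n).hom
        ((tensorObjEquiv C D (n + 1)).symm (GradedTensor.lTensor C.X (D.iCycles ·) (n + 1) x))) =
      GradedTensor.lTensor C.X (D.iCycles ·) n
        (GradedTensor.rTensor (C.iCycles ·) (D.cycles ·) n
          (rTensorToCycles C (D.cycles ·) n x)) := by
  funext ⟨(i, j), hij⟩
  have h₀ : (0 : D.cycles (j + 1) ⟶ D.X j).hom.lTensor (C.X i) = 0 := LinearMap.lTensor_zero _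
  rw [tensorObjEquiv_d, LinearEquiv.apply_symm_apply, GradedTensor.lTensor_apply,
    GradedTensor.lTensor_apply, ← LinearMap.lTensor_comp_apply, ← ModuleCat.hom_comp,
    HomologicalComplex.iCycles_d, h₀, LinearMap.zero_apply, smul_zero, add_zero,
    rTensor_lTensor_apply, ← C.toCycles_i, ModuleCat.hom_comp, LinearMap.rTensor_comp_apply]
  rfl

variable [∀ i, Module.Flat k (C.cycles i)] [∀ i, Module.Flat k (differentialRange C i)]

/- A class in `B ⊗ H(D)` is represented by the image of an element of `C ⊗ Z(D)`, on which the
differential of `C ⊗ D` is `d ⊗ 1`. -/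
theorem δ_zeroDifferentialHomologyEquiv (n : ℕ)
    (y : GradedTensor (differentialRange C) (D.homology ·) (n + 1)) :
    ((tensorRight_cyclesShortComplex_shortExact C D).δ (n + 1) n rfl).hom
        (zeroDifferentialHomologyEquiv (differentialRange C) D (n + 1) y) =
      zeroDifferentialHomologyEquiv (C.cycles ·) D n
        (connectingMap C D (s := fun p => p.1 + p.2 = n) (fun p => by lia) y) := by
  obtain ⟨y, rfl⟩ :=
    GradedTensor.lTensor_surjective (differentialRange C) (homologyπ_surjective D ·) _ y
  obtain ⟨x, rfl⟩ := GradedTensor.rTensor_surjective (toDifferentialRange_surjective C) _ _ y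
  obtain ⟨z₃, hz₃⟩ := exists_cycle_of_lTensor_iCycles (differentialRange C) D
    (GradedTensor.rTensor (toDifferentialRange C) (D.cycles ·) (n + 1) x)
  obtain ⟨z₁, hz₁⟩ := exists_cycle_of_lTensor_iCycles (C.cycles ·) D
    (rTensorToCycles C (D.cycles ·) n x)
  rw [connectingMap_lTensor_homologyπ, zeroDifferentialHomologyEquiv_lTensor_homologyπ _ hz₃,
    zeroDifferentialHomologyEquiv_lTensor_homologyπ _ hz₁]
  apply δ_homologyπ_apply (tensorRight_cyclesShortComplex_shortExact C D)
    (x₂ := (tensorObjEquiv C D (n + 1)).symm (GradedTensor.lTensor C.X (D.iCycles ·) (n + 1) x))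
  · refine (tensorObjEquiv (zeroDifferential (differentialRange C)) D (n + 1)).injective ?_
    refine (tensorObjEquiv_tensorHom_id D (cyclesShortComplex C).g _).trans ?_
    rw [LinearEquiv.apply_symm_apply, hz₃]
    exact GradedTensor.rTensor_lTensor_apply (toDifferentialRange C) (D.iCycles ·) x
  · refine (tensorObjEquiv C D n).injective ?_
    refine (tensorObjEquiv_tensorHom_id D (cyclesShortComplex C).f _).trans ?_
    rw [hz₁, tensorObjEquiv_d_lTensor_iCycles]
    exact GradedTensor.rTensor_lTensor_apply (C.iCycles ·) (D.iCycles ·) _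

end Kuenneth

section Exactness

open scoped TensorProduct

variable {k : Type u} [CommRing k] (C D : ChainComplex (ModuleCat.{u} k) ℕ)

theorem connectingMap_eq_zero_iff {s : ℕ × ℕ → Prop} {n : ℕ} (hs : ∀ p, s p ↔ p.1 + 1 + p.2 = n)
    (y : GradedTensor (differentialRange C) (D.homology ·) n) :
    connectingMap C D hs y = 0 ↔ ∀ i j, ∀ h : i + 1 + j = n,
      (boundaryToCycles C i).hom.rTensor (D.homology j) (y ⟨(i + 1, j), h⟩) = 0 :=
  funext_iff.trans ⟨fun h i j hij => h ⟨(i, j), (hs _).2 hij⟩, fun h p => h _ _ ((hs _).1 p.2)⟩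

theorem connectingMap_rTensor_homologyπ_exact (n : ℕ) :
    Function.Exact (connectingMap C D (s := fun p => p.1 + p.2 = n) (n := n + 1)
        (fun p => by lia))
      (GradedTensor.rTensor (C.homologyπ ·) (D.homology ·) n) :=
  LinearEquiv.precomp_exact_iff_exact.2
    (piMap_exact fun p => rTensor_exact _ (boundaryToCycles_exact C p.1.1)
      (homologyπ_surjective C p.1.1))

theorem exists_tor_connectingMap_exact [∀ i, Module.Flat k (C.cycles i)] {s : ℕ × ℕ → Prop}
    {n : ℕ} (hs : ∀ p, s p ↔ p.1 + 1 + p.2 = n) :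
    ∃ t : (∀ p : {p : ℕ × ℕ // s p},
          ((Tor (ModuleCat k) 1).obj (C.homology p.1.1)).obj (D.homology p.1.2)) →ₗ[k]
        GradedTensor (differentialRange C) (D.homology ·) n,
      Function.Injective t ∧ Function.Exact t (connectingMap C D hs) := by
  choose t t_injective t_exact using fun p : {p : ℕ × ℕ // s p} =>
    exists_tor_one_exact (boundaryToCycles_injective C p.1.1) (boundaryToCycles_exact C p.1.1)
      (homologyπ_surjective C p.1.1) (D.homology p.1.2)
  let e := GradedTensor.shiftEquiv (differentialRange C) (D.homology ·) hs
  exact ⟨e.symm.toLinearMap ∘ₗ LinearMap.piMap t,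
    e.symm.injective.comp (Function.Injective.piMap t_injective),
    (LinearEquiv.conj_exact_iff_exact _ _ e.symm).2 (piMap_exact t_exact)⟩

variable [∀ i, Module.Flat k (C.cycles i)] [∀ i, Module.Flat k (differentialRange C i)]

/-- The map `⨁ Z_i ⊗ H_j(D) → H_n(C ⊗ D)` induced by the inclusion `Z → C`. -/
noncomputable def homologyOfCycles (n : ℕ) : GradedTensor (C.cycles ·) (D.homology ·) n →ₗ[k]
    (HomologicalComplex.tensorObj C D).homology n :=
  (HomologicalComplex.homologyMap (tensorRightShortComplex (cyclesShortComplex C) D).f n).hom ∘ₗ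
    (zeroDifferentialHomologyEquiv (C.cycles ·) D n).toLinearMap

/-- The map `H_n(C ⊗ D) → ⨁ B_i ⊗ H_j(D)`, with `i + j = n - 1`, induced by the differential of
`C`. -/
noncomputable def homologyToBoundaries (n : ℕ) :
    (HomologicalComplex.tensorObj C D).homology n →ₗ[k]
      GradedTensor (differentialRange C) (D.homology ·) n :=
  (zeroDifferentialHomologyEquiv (differentialRange C) D n).symm.toLinearMap ∘ₗ
    (HomologicalComplex.homologyMap (tensorRightShortComplex (cyclesShortComplex C) D).g n).hom

theorem connectingMap_homologyOfCycles_exact (n : ℕ) :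
    Function.Exact (connectingMap C D (s := fun p => p.1 + p.2 = n) (n := n + 1)
      (fun p => by lia)) (homologyOfCycles C D n) := by
  have h := (ShortComplex.ShortExact.moduleCat_exact_iff_function_exact _).1
    ((tensorRight_cyclesShortComplex_shortExact C D).homology_exact₁ (n + 1) n rfl)
  refine (Function.Exact.iff_of_ladder_linearEquiv
    (e₁ := zeroDifferentialHomologyEquiv (differentialRange C) D (n + 1))
    (e₂ := zeroDifferentialHomologyEquiv (C.cycles ·) D n)
    (e₃ := LinearEquiv.refl k ((HomologicalComplex.tensorObj C D).homology n)) ?_ rfl).1 h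
  exact LinearMap.ext (δ_zeroDifferentialHomologyEquiv C D n)

theorem homologyOfCycles_homologyToBoundaries_exact (n : ℕ) :
    Function.Exact (homologyOfCycles C D n) (homologyToBoundaries C D n) := by
  have h := (ShortComplex.ShortExact.moduleCat_exact_iff_function_exact _).1
    ((tensorRight_cyclesShortComplex_shortExact C D).homology_exact₂ n)
  exact LinearEquiv.precomp_exact_iff_exact.2
    (LinearEquiv.postcomp_exact_iff_exact.2 h)

theorem homologyToBoundaries_connectingMap_exact {s : ℕ × ℕ → Prop} {n : ℕ}
    (hs : ∀ p, s p ↔ p.1 + 1 + p.2 = n) :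
    Function.Exact (homologyToBoundaries C D n) (connectingMap C D hs) := by
  cases n with
  | zero =>
    have : IsEmpty {p : ℕ × ℕ // s p} := ⟨fun p => by have := (hs p.1).1 p.2; lia⟩
    have := (GradedTensor.shiftEquiv (differentialRange C) (D.homology ·) hs).toEquiv.subsingleton
    exact fun y => iff_of_true (Subsingleton.elim _ _) ⟨0, Subsingleton.elim _ _⟩
  | succ n =>
    intro y
    have h := (ShortComplex.ShortExact.moduleCat_exact_iff_function_exact _).1
      ((tensorRight_cyclesShortComplex_shortExact C D).homology_exact₃ (n + 1) n rfl)
    have hδ : connectingMap C D hs y = 0 ↔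
        ((tensorRight_cyclesShortComplex_shortExact C D).δ (n + 1) n rfl).hom
          (zeroDifferentialHomologyEquiv (differentialRange C) D (n + 1) y) = 0 := by
      rw [δ_zeroDifferentialHomologyEquiv, LinearEquiv.map_eq_zero_iff, connectingMap_eq_zero_iff,
        connectingMap_eq_zero_iff]
    rw [hδ]
    refine (h _).trans (exists_congr fun x => ?_)
    exact (LinearEquiv.symm_apply_eq _).symm

theorem kuenneth_short_exact_sequence_general {k : Type u} [CommRing k]
    (C D : ChainComplex (ModuleCat.{u} k) ℕ)
    (hCflat : ∀ i : ℕ, Module.Flat k (C.X i))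
    (hBflat : ∀ i : ℕ, Module.Flat k (LinearMap.range (C.d (i + 1) i).hom)) (n : ℕ) :
    ∃ (f : (DirectSum {p : ℕ × ℕ // p.1 + p.2 = n}
            (fun p => C.homology p.1.1 ⊗[k] D.homology p.1.2)) →ₗ[k]
          (HomologicalComplex.tensorObj C D).homology n)
      (g : (HomologicalComplex.tensorObj C D).homology n →ₗ[k]
          (DirectSum {p : ℕ × ℕ // p.1 + p.2 + 1 = n}
            (fun p => ((Tor (ModuleCat k) 1).obj (C.homology p.1.1)).obj (D.homology p.1.2)))),
      Function.Injective f ∧ Function.Exact f g ∧ Function.Surjective g := by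
  classical
  have := flat_differentialRange C hBflat
  have := flat_cycles C
  have hs (p : ℕ × ℕ) : p.1 + p.2 + 1 = n ↔ p.1 + 1 + p.2 = n := by lia
  obtain ⟨t, t_injective, t_exact⟩ := exists_tor_connectingMap_exact C D hs
  have := Fintype.ofFinite {p : ℕ × ℕ // p.1 + p.2 = n}
  have := Fintype.ofFinite {p : ℕ × ℕ // p.1 + p.2 + 1 = n}
  let e₁ := DirectSum.linearEquivFunOnFintype k {p : ℕ × ℕ // p.1 + p.2 = n}
    fun p => C.homology p.1.1 ⊗[k] D.homology p.1.2
  let e₂ := DirectSum.linearEquivFunOnFintype k {p : ℕ × ℕ // p.1 + p.2 + 1 = n}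
    fun p => ((Tor (ModuleCat k) 1).obj (C.homology p.1.1)).obj (D.homology p.1.2)
  exact exists_shortExact_of_exact (p := e₁.symm.toLinearMap ∘ₗ _) (t := t ∘ₗ e₂.toLinearMap)
    (connectingMap_homologyOfCycles_exact C D n)
    (homologyOfCycles_homologyToBoundaries_exact C D n)
    (homologyToBoundaries_connectingMap_exact C D hs)
    (LinearEquiv.postcomp_exact_iff_exact.2 (connectingMap_rTensor_homologyπ_exact C D n))
    (e₁.symm.surjective.comp (GradedTensor.rTensor_surjective (homologyπ_surjective C ·) _ n))
    (LinearEquiv.precomp_exact_iff_exact.2 t_exact) (t_injective.comp e₂.injective)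

end Exactness

/-- **Künneth short exact sequence.**
Let `k` be a commutative ring and let `C`, `D` be `ℕ`-indexed chain complexes of
`k`-modules.  If every term `C_i` is a flat `k`-module and every boundary module
`B_i(C) = im(d : C_{i+1} → C_i)` is a flat `k`-module, then for every `n ≥ 0` there is a
short exact sequence of `k`-modules
`0 → ⊕_{i+j=n} H_i(C) ⊗_k H_j(D) → H_n(C ⊗ D) → ⊕_{i+j=n-1} Tor_1^k(H_i(C), H_j(D)) → 0`,
where `C ⊗ D` denotes the total complex of the levelwise tensor product double complex. -/
theorem kuenneth_short_exact_sequence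
    (k : Type) [CommRing k] (C D : ChainComplex (ModuleCat k) ℕ)
    (hCflat : ∀ i : ℕ, Module.Flat k (C.X i))
    (hBflat : ∀ i : ℕ, Module.Flat k (LinearMap.range (C.d (i + 1) i).hom)) (n : ℕ) :
    ∃ (f : (DirectSum {p : ℕ × ℕ // p.1 + p.2 = n}
            (fun p => TensorProduct k (C.homology p.1.1) (D.homology p.1.2))) →ₗ[k]
          (HomologicalComplex.tensorObj C D).homology n)
      (g : ((HomologicalComplex.tensorObj C D).homology n : Type) →ₗ[k]
          (DirectSum {p : ℕ × ℕ // p.1 + p.2 + 1 = n}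
            (fun p => ((Tor (ModuleCat k) 1).obj (C.homology p.1.1)).obj (D.homology p.1.2)))),
      Function.Injective f ∧ Function.Exact f g ∧ Function.Surjective g :=
  kuenneth_short_exact_sequence_general C D hCflat hBflat n
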